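/- arXiv:2107.08281 — 4 statements merged into one kernel-verified Lean document; each statement's English description precedes it below -/
import Mathlib

section
/- Under assumptions (A1)–(A3) with τμ − ξ > 0 and H∘B convex, the C-FISTA iterates satisfy, for every k ≥ 0, F(x^{k+1}) − F(x*) + ((τμ−ξ)/2)‖z^{k+1} − x*‖² ≤ (1 − √((τμ−ξ)(rL−ξ))/(rL)) · ( F(x^k) − F(x*) + ((τμ−ξ)/2)‖z^k − x*‖² ). -/
open scoped RealInnerProductSpace

/-!
Put `h = H ∘ B`, `σ = τμ - ξ` and `M = rL`. Assumption (A3) bounds the first-order Taylor remainder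
of `B` at `u`, tested against `∇H (B u)`, by `ξ/2 ‖v - u‖²`. So on the span of `X` the function `h`
lies above its linearization plus `σ/2 ‖v - u‖²` and below it plus `(M + ξ)/2 ‖v - u‖²`. The
proximal model is `M`-strongly convex, hence grows quadratically around its minimizer `x⁺`; with the
two bounds on `h` this gives, for every `w ∈ X`,
`F x⁺ ≤ F w + M ⟪x⁺ - y, w - y⟫ - (M - ξ)/2 ‖x⁺ - y‖² - σ/2 ‖w - y‖²`.
Average this over `w = xᵏ` and `w = x*` with weights `1 - θ` and `θ`. As `σα = Mθ` and
`σα² = M - ξ`, the terms in `x⁺ - y` cancel against those in the expansion of `σ/2 ‖zᵏ⁺¹ - x*‖²`,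
and convexity of the squared norm finishes the proof.
-/

section FirstOrder

variable {E G : Type*} [NormedAddCommGroup E] [NormedAddCommGroup G]

lemma le_add_fderiv_add_sq_of_fderiv_sub_le [NormedSpace ℝ E] {f : E → ℝ} {u v : E} {c : ℝ}
    (hf : ∀ w ∈ segment ℝ u v, DifferentiableAt ℝ f w)
    (hc : ∀ w ∈ segment ℝ u v, (fderiv ℝ f w - fderiv ℝ f u) (w - u) ≤ c * ‖w - u‖ ^ 2) :
    f v ≤ f u + fderiv ℝ f u (v - u) + c / 2 * ‖v - u‖ ^ 2 := by
  set d := v - u with hd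
  have mem_seg {t : ℝ} (ht : t ∈ Set.Icc 0 1) : u + t • d ∈ segment ℝ u v := by
    rw [segment_eq_image']
    exact ⟨t, ht, rfl⟩
  have hline (t : ℝ) (ht : t ∈ Set.Icc 0 1) :
      HasDerivAt (fun s : ℝ => f (u + s • d)) (fderiv ℝ f (u + t • d) d) t :=
    (hf _ (mem_seg ht)).hasFDerivAt.comp_hasDerivAt t
      (by simpa using ((hasDerivAt_id t).smul_const d).const_add u)
  have hbound (t : ℝ) : HasDerivAt
      (fun s : ℝ => f u + s * fderiv ℝ f u d + c / 2 * ‖d‖ ^ 2 * s ^ 2)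
      (fderiv ℝ f u d + c * ‖d‖ ^ 2 * t) t := by
    refine ((((hasDerivAt_id t).mul_const (fderiv ℝ f u d)).const_add (f u)).add
      ((hasDerivAt_pow 2 t).const_mul (c / 2 * ‖d‖ ^ 2))).congr_deriv ?_
    push_cast
    ring
  have hslope (t : ℝ) (ht : t ∈ Set.Ico 0 1) :
      fderiv ℝ f (u + t • d) d ≤ fderiv ℝ f u d + c * ‖d‖ ^ 2 * t := by
    rcases ht.1.eq_or_lt with rfl | ht0
    · simp
    · have h := hc _ (mem_seg ⟨ht.1, ht.2.le⟩)
      rw [add_sub_cancel_left, norm_smul, Real.norm_of_nonneg ht.1, map_smul, smul_eq_mul,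
        sub_apply] at h
      refine le_of_mul_le_mul_left ?_ ht0
      linear_combination h
  have h := image_le_of_deriv_right_le_deriv_boundary
    (fun t ht => (hline t ht).continuousAt.continuousWithinAt)
    (fun t ht => (hline t ⟨ht.1, ht.2.le⟩).hasDerivWithinAt) (by simp)
    (fun t _ => (hbound t).continuousAt.continuousWithinAt)
    (fun t _ => (hbound t).hasDerivWithinAt) hslope (Set.right_mem_Icc.2 zero_le_one)
  simpa [hd] using h

lemma le_add_inner_gradient_add_sq_of_lipschitz_gradient [InnerProductSpace ℝ E] [CompleteSpace E]
    {f : E → ℝ} (hf : Differentiable ℝ f) {L : ℝ}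
    (hlip : ∀ u v, ‖gradient f u - gradient f v‖ ≤ L * ‖u - v‖) (u v : E) :
    f v ≤ f u + ⟪gradient f u, v - u⟫ + L / 2 * ‖v - u‖ ^ 2 := by
  rw [inner_gradient_left]
  refine le_add_fderiv_add_sq_of_fderiv_sub_le (fun w _ => hf w) fun w _ => ?_
  calc (fderiv ℝ f w - fderiv ℝ f u) (w - u)
      = ⟪gradient f w - gradient f u, w - u⟫ := by
        rw [inner_sub_left, inner_gradient_left, inner_gradient_left, sub_apply]
    _ ≤ ‖gradient f w - gradient f u‖ * ‖w - u‖ := real_inner_le_norm _ _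
    _ ≤ L * ‖w - u‖ * ‖w - u‖ := by gcongr; exact hlip w u
    _ = L * ‖w - u‖ ^ 2 := by ring

lemma mul_strongConvexity_le_mul_lipschitz [InnerProductSpace ℝ E] [CompleteSpace E]
    {f : E → ℝ} (hf : Differentiable ℝ f) {μ L τ r d : ℝ} {u v : E} (hμ : 0 ≤ μ) (hL : 0 ≤ L)
    (hsc : ∀ u v, f v ≥ f u + ⟪gradient f u, v - u⟫ + μ / 2 * ‖v - u‖ ^ 2)
    (hlip : ∀ u v, ‖gradient f u - gradient f v‖ ≤ L * ‖u - v‖)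
    (hd : 0 < d) (hτ : τ * d ≤ ‖v - u‖ ^ 2) (hr : ‖v - u‖ ^ 2 ≤ r * d) : τ * μ ≤ r * L := by
  have hμL : μ * ‖v - u‖ ^ 2 ≤ L * ‖v - u‖ ^ 2 := by
    linarith [hsc u v, le_add_inner_gradient_add_sq_of_lipschitz_gradient hf hlip u v]
  refine le_of_mul_le_mul_right ?_ hd
  calc τ * μ * d = μ * (τ * d) := by ring
    _ ≤ μ * ‖v - u‖ ^ 2 := by gcongr
    _ ≤ L * ‖v - u‖ ^ 2 := hμL
    _ ≤ L * (r * d) := by gcongr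
    _ = r * L * d := by ring

lemma abs_inner_sub_sub_fderiv_le [NormedSpace ℝ E] [InnerProductSpace ℝ G] {B : E → G} {u v : E}
    {p : G} {ξ : ℝ} (hB : ∀ w ∈ segment ℝ u v, DifferentiableAt ℝ B w)
    (hξ : ∀ w ∈ segment ℝ u v,
      |⟪p, (fderiv ℝ B w - fderiv ℝ B u) (w - u)⟫| ≤ ξ * ‖w - u‖ ^ 2) :
    |⟪p, B v - B u - fderiv ℝ B u (v - u)⟫| ≤ ξ / 2 * ‖v - u‖ ^ 2 := by
  have one_sided (q : G) (hq : ∀ w ∈ segment ℝ u v,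
      ⟪q, (fderiv ℝ B w - fderiv ℝ B u) (w - u)⟫ ≤ ξ * ‖w - u‖ ^ 2) :
      ⟪q, B v - B u - fderiv ℝ B u (v - u)⟫ ≤ ξ / 2 * ‖v - u‖ ^ 2 := by
    have hderiv (w : E) (hw : w ∈ segment ℝ u v) :
        HasFDerivAt (fun x => ⟪q, B x⟫) (innerSL ℝ q ∘L fderiv ℝ B w) w :=
      (innerSL ℝ q).hasFDerivAt.comp w (hB w hw).hasFDerivAt
    have hu := left_mem_segment ℝ u v
    have h := le_add_fderiv_add_sq_of_fderiv_sub_le (c := ξ)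
      (fun w hw => (hderiv w hw).differentiableAt) fun w hw => by
        rw [(hderiv w hw).fderiv, (hderiv u hu).fderiv, ← ContinuousLinearMap.comp_sub]
        exact hq w hw
    rw [(hderiv u hu).fderiv, ContinuousLinearMap.comp_apply, innerSL_apply_apply] at h
    rw [inner_sub_right, inner_sub_right]
    linarith
  refine abs_le'.2 ⟨one_sided p fun w hw => (le_abs_self _).trans (hξ w hw), ?_⟩
  rw [← inner_neg_left]
  refine one_sided (-p) fun w hw => ?_
  rw [inner_neg_left]
  exact (neg_le_abs _).trans (hξ w hw)

end FirstOrder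

section Composition

variable {E G : Type*} [NormedAddCommGroup E] [InnerProductSpace ℝ E] [CompleteSpace E]
  [NormedAddCommGroup G] [InnerProductSpace ℝ G] [CompleteSpace G]
  {H : G → ℝ} {B : E → G} {u v : E} {L μ r τ ξ : ℝ}

lemma inner_gradient_comp (hH : DifferentiableAt ℝ H (B u)) (hB : DifferentiableAt ℝ B u) (d : E) :
    ⟪gradient (fun x => H (B x)) u, d⟫ = ⟪gradient H (B u), fderiv ℝ B u d⟫ := by
  rw [inner_gradient_left, inner_gradient_left, fderiv_fun_comp u hH hB,
    ContinuousLinearMap.comp_apply]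

lemma comp_le_add_inner_gradient_add_sq (hH : Differentiable ℝ H) (hL : 0 ≤ L)
    (hlip : ∀ p q, ‖gradient H p - gradient H q‖ ≤ L * ‖p - q‖)
    (hB : ∀ w ∈ segment ℝ u v, DifferentiableAt ℝ B w)
    (hr : ‖B v - B u‖ ^ 2 ≤ r * ‖v - u‖ ^ 2)
    (hξ : ∀ w ∈ segment ℝ u v,
      |⟪gradient H (B u), (fderiv ℝ B w - fderiv ℝ B u) (w - u)⟫| ≤ ξ * ‖w - u‖ ^ 2) :
    H (B v) ≤ H (B u) + ⟪gradient (fun x => H (B x)) u, v - u⟫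
      + (r * L + ξ) / 2 * ‖v - u‖ ^ 2 := by
  have hsmooth := le_add_inner_gradient_add_sq_of_lipschitz_gradient hH hlip (B u) (B v)
  have hrem := (abs_le.1 (abs_inner_sub_sub_fderiv_le hB hξ)).2
  rw [inner_sub_right, ← inner_gradient_comp (hH _) (hB u (left_mem_segment ℝ u v))] at hrem
  linear_combination hsmooth + hrem + L / 2 * hr

lemma add_inner_gradient_add_sq_le_comp (hH : DifferentiableAt ℝ H (B u)) (hμ : 0 ≤ μ)
    (hsc : H (B v) ≥ H (B u) + ⟪gradient H (B u), B v - B u⟫ + μ / 2 * ‖B v - B u‖ ^ 2)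
    (hB : ∀ w ∈ segment ℝ u v, DifferentiableAt ℝ B w)
    (hτ : τ * ‖v - u‖ ^ 2 ≤ ‖B v - B u‖ ^ 2)
    (hξ : ∀ w ∈ segment ℝ u v,
      |⟪gradient H (B u), (fderiv ℝ B w - fderiv ℝ B u) (w - u)⟫| ≤ ξ * ‖w - u‖ ^ 2) :
    H (B u) + ⟪gradient (fun x => H (B x)) u, v - u⟫ + (τ * μ - ξ) / 2 * ‖v - u‖ ^ 2
      ≤ H (B v) := by
  have hrem := (abs_le.1 (abs_inner_sub_sub_fderiv_le hB hξ)).1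
  rw [inner_sub_right, ← inner_gradient_comp hH (hB u (left_mem_segment ℝ u v))] at hrem
  linear_combination hsc + hrem + μ / 2 * hτ

end Composition

section ProximalStep

lemma add_modulus_le_of_isMinOn_of_uniformConvexOn {E : Type*} [NormedAddCommGroup E]
    [NormedSpace ℝ E] {X : Set E} {φ : ℝ → ℝ} {f : E → ℝ} {x w : E}
    (hf : UniformConvexOn X φ f) (hmin : IsMinOn f X x) (hx : x ∈ X) (hw : w ∈ X) :
    f x + φ ‖w - x‖ ≤ f w := by
  have hsegment (t : ℝ) (ht : t ∈ Set.Ioo 0 1) : f x + (1 - t) * φ ‖w - x‖ ≤ f w := by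
    have ht' : 0 ≤ 1 - t := sub_nonneg.2 ht.2.le
    have hle := (isMinOn_iff.1 hmin _ (hf.1 hw hx ht.1.le ht' (by ring))).trans
      (hf.2 hw hx ht.1.le ht' (by ring))
    simp only [smul_eq_mul] at hle
    refine le_of_mul_le_mul_left ?_ ht.1
    linear_combination hle
  have hlim : Filter.Tendsto (fun t : ℝ => f x + (1 - t) * φ ‖w - x‖) (nhdsWithin 0 (Set.Ioi 0))
      (nhds (f x + φ ‖w - x‖)) := by
    have hcont : Continuous fun t : ℝ => f x + (1 - t) * φ ‖w - x‖ := by fun_prop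
    simpa using (hcont.tendsto 0).mono_left nhdsWithin_le_nhds
  exact le_of_tendsto hlim (Filter.eventually_of_mem (Ioo_mem_nhdsGT one_pos) hsegment)

variable {E : Type*} [NormedAddCommGroup E] [InnerProductSpace ℝ E] [CompleteSpace E]
  {X : Set E} {h R : E → ℝ} {M ξ σ : ℝ} {x y w : E}

/-- The objective of the proximal gradient step for `h + R` at `y` with step size `1 / M`, as a
function of `w`: `h` is replaced by its linearization at `y` plus `M / 2 * ‖w - y‖ ^ 2`. -/
noncomputable def proxModel (h R : E → ℝ) (M : ℝ) (y w : E) : ℝ :=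
  h y + ⟪gradient h y, w - y⟫ + M / 2 * ‖w - y‖ ^ 2 + R w

lemma strongConvexOn_proxModel (hR : ConvexOn ℝ X R) :
    StrongConvexOn X M (proxModel h R M y) := by
  have haffine : ConvexOn ℝ X fun w =>
      innerSL ℝ (gradient h y - M • y) w + (h y - ⟪gradient h y, y⟫ + M / 2 * ‖y‖ ^ 2) :=
    ((innerSL ℝ (gradient h y - M • y)).toLinearMap.convexOn hR.1).add_const _
  rw [strongConvexOn_iff_convex]
  refine (haffine.add hR).congr fun w _ => ?_
  simp only [proxModel, Pi.add_apply, innerSL_apply_apply, inner_sub_left, inner_sub_right,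
    real_inner_smul_left, norm_sub_sq_real, real_inner_comm w y]
  ring

lemma add_le_of_isMinOn_proxModel (hR : ConvexOn ℝ X R) (hmin : IsMinOn (proxModel h R M y) X x)
    (hx : x ∈ X) (hw : w ∈ X)
    (hupper : h x ≤ h y + ⟪gradient h y, x - y⟫ + (M + ξ) / 2 * ‖x - y‖ ^ 2)
    (hlower : h y + ⟪gradient h y, w - y⟫ + σ / 2 * ‖w - y‖ ^ 2 ≤ h w) :
    h x + R x ≤ h w + R w + M * ⟪x - y, w - y⟫ - (M - ξ) / 2 * ‖x - y‖ ^ 2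
      - σ / 2 * ‖w - y‖ ^ 2 := by
  have hgrowth := add_modulus_le_of_isMinOn_of_uniformConvexOn
    (strongConvexOn_proxModel hR) hmin hx hw
  have hdist : ‖w - x‖ ^ 2 = ‖w - y‖ ^ 2 - 2 * ⟪x - y, w - y⟫ + ‖x - y‖ ^ 2 := by
    rw [← sub_sub_sub_cancel_right w x y, norm_sub_sq_real, real_inner_comm]
  simp only [proxModel, hdist] at hgrowth
  linear_combination hgrowth + hupper + hlower

lemma comp_add_le_of_isMinOn_proxModel {G : Type*} [NormedAddCommGroup G] [InnerProductSpace ℝ G]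
    [CompleteSpace G] {H : G → ℝ} {B : E → G} {S : Set E} {μ L r τ : ℝ}
    (hH : Differentiable ℝ H) (hμ : 0 ≤ μ) (hL : 0 ≤ L)
    (hsc : ∀ u v, H v ≥ H u + ⟪gradient H u, v - u⟫ + μ / 2 * ‖v - u‖ ^ 2)
    (hlip : ∀ u v, ‖gradient H u - gradient H v‖ ≤ L * ‖u - v‖)
    (hS : Convex ℝ S) (hXS : X ⊆ S) (hy : y ∈ S) (hB : ∀ u ∈ S, DifferentiableAt ℝ B u)
    (hr : ∀ u ∈ S, ‖B u - B y‖ ^ 2 ≤ r * ‖u - y‖ ^ 2)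
    (hτ : ∀ u ∈ S, τ * ‖u - y‖ ^ 2 ≤ ‖B u - B y‖ ^ 2)
    (hξ : ∀ u ∈ S,
      |⟪gradient H (B y), (fderiv ℝ B u - fderiv ℝ B y) (u - y)⟫| ≤ ξ * ‖u - y‖ ^ 2)
    (hR : ConvexOn ℝ X R)
    (hmin : IsMinOn (proxModel (fun v => H (B v)) R (r * L) y) X x) (hx : x ∈ X) (hw : w ∈ X) :
    H (B x) + R x ≤ H (B w) + R w + r * L * ⟪x - y, w - y⟫ - (r * L - ξ) / 2 * ‖x - y‖ ^ 2
      - (τ * μ - ξ) / 2 * ‖w - y‖ ^ 2 := by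
  have hseg {v : E} (hv : v ∈ X) : segment ℝ y v ⊆ S := hS.segment_subset hy (hXS hv)
  have hupper := comp_le_add_inner_gradient_add_sq hH hL hlip (fun u hu => hB u (hseg hx hu))
    (hr x (hXS hx)) fun u hu => hξ u (hseg hx hu)
  have hlower := add_inner_gradient_add_sq_le_comp (hH _) hμ (hsc _ _)
    (fun u hu => hB u (hseg hw hu)) (hτ w (hXS hw)) fun u hu => hξ u (hseg hw hu)
  exact add_le_of_isMinOn_proxModel hR hmin hx hw hupper hlower

end ProximalStep

section Acceleration

lemma mul_sqrt_div_self_eq_sqrt_mul {σ : ℝ} (hσ : 0 ≤ σ) (N : ℝ) :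
    σ * √(N / σ) = √(σ * N) := by
  rcases hσ.eq_or_lt with rfl | hσ
  · simp
  · rw [← Real.sqrt_sq hσ.le, ← Real.sqrt_mul (sq_nonneg σ), Real.sqrt_sq hσ.le]
    congr 1
    field_simp

lemma sqrt_mul_div_le_one {a b M : ℝ} (hb : 0 ≤ b) (haM : a ≤ M) (hbM : b ≤ M) :
    √(a * b) / M ≤ 1 := by
  have hM : 0 ≤ M := hb.trans hbM
  refine div_le_one_of_le₀ (Real.sqrt_le_iff.2 ⟨hM, ?_⟩) hM
  rw [sq]
  exact mul_le_mul haM hbM hb hM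

lemma cfista_parameter_relations {σ ξ M θ α : ℝ} (hσ : 0 < σ) (hξ : 0 ≤ ξ) (hM : σ + ξ ≤ M)
    (hθ : θ = √(σ * (M - ξ)) / M) (hα : α = √((M - ξ) / σ)) :
    0 ≤ θ ∧ θ ≤ 1 ∧ σ * α = M * θ ∧ σ * α ^ 2 = M - ξ := by
  have hM₀ : 0 < M := by linarith
  have hN : 0 ≤ M - ξ := by linarith
  refine ⟨by rw [hθ]; positivity, ?_, ?_, ?_⟩
  · exact hθ ▸ sqrt_mul_div_le_one hN (by linarith) (by linarith)
  · rw [hα, hθ, mul_sqrt_div_self_eq_sqrt_mul hσ.le, mul_div_cancel₀ _ hM₀.ne']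
  · rw [hα, Real.sq_sqrt (by positivity), mul_div_cancel₀ _ hσ.ne']

lemma norm_one_sub_smul_add_smul_sq_le {E : Type*} [SeminormedAddCommGroup E]
    [NormedSpace ℝ E] {θ : ℝ} (hθ₀ : 0 ≤ θ) (hθ₁ : θ ≤ 1) (a b : E) :
    ‖(1 - θ) • a + θ • b‖ ^ 2 ≤ (1 - θ) * ‖a‖ ^ 2 + θ * ‖b‖ ^ 2 :=
  ((convexOn_univ_norm (E := E)).pow (fun _ _ => norm_nonneg _) 2).2 trivial trivial
    (sub_nonneg.2 hθ₁) hθ₀ (sub_add_cancel 1 θ)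

lemma cfista_coupling_identity {𝕜 E : Type*} [Field 𝕜] [AddCommGroup E] [Module 𝕜 E]
    {x y z w : E} {θ : 𝕜} (hθ : 1 + θ ≠ 0)
    (hy : y = (1 / (1 + θ)) • x + (θ / (1 + θ)) • z) :
    (1 - θ) • (x - y) + θ • (w - y) = -θ • ((1 - θ) • (z - w) + θ • (y - w)) := by
  have hx : x = (1 + θ) • y - θ • z := by
    rw [hy]
    match_scalars <;> field_simp
    ring
  rw [hx]
  module

lemma lyapunov_contraction {E : Type*} [NormedAddCommGroup E] [InnerProductSpace ℝ E]
    {x y z w x' z' : E} {θ α σ M N Fx Fx' Fw : ℝ}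
    (hθ₀ : 0 ≤ θ) (hθ₁ : θ ≤ 1) (hσ : 0 ≤ σ) (hα : σ * α = M * θ) (hα₂ : σ * α ^ 2 = N)
    (hy : y = (1 / (1 + θ)) • x + (θ / (1 + θ)) • z)
    (hz' : z' = (1 - θ) • z + θ • y + α • (x' - y))
    (hx : Fx' ≤ Fx + M * ⟪x' - y, x - y⟫ - N / 2 * ‖x' - y‖ ^ 2 - σ / 2 * ‖x - y‖ ^ 2)
    (hw : Fx' ≤ Fw + M * ⟪x' - y, w - y⟫ - N / 2 * ‖x' - y‖ ^ 2 - σ / 2 * ‖w - y‖ ^ 2) :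
    Fx' - Fw + σ / 2 * ‖z' - w‖ ^ 2 ≤ (1 - θ) * (Fx - Fw + σ / 2 * ‖z - w‖ ^ 2) := by
  set g := x' - y
  set v := (1 - θ) • (z - w) + θ • (y - w) with hv
  have hx_drop : Fx' ≤ Fx + M * ⟪g, x - y⟫ - N / 2 * ‖g‖ ^ 2 :=
    hx.trans (sub_le_self _ (by positivity))
  have hinner : (1 - θ) * ⟪g, x - y⟫ + θ * ⟪g, w - y⟫ = -θ * ⟪g, v⟫ := by
    rw [← real_inner_smul_right, ← real_inner_smul_right, ← real_inner_smul_right,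
      ← inner_add_right, cfista_coupling_identity (by positivity) hy]
  have hdescent : Fx' ≤ (1 - θ) * Fx + θ * Fw - M * θ * ⟪g, v⟫ - N / 2 * ‖g‖ ^ 2
      - θ * (σ / 2 * ‖y - w‖ ^ 2) := by
    rw [norm_sub_rev w y] at hw
    linear_combination (1 - θ) * hx_drop + θ * hw + M * hinner
  have hdist : σ / 2 * ‖z' - w‖ ^ 2 = σ / 2 * ‖v‖ ^ 2 + M * θ * ⟪g, v⟫ + N / 2 * ‖g‖ ^ 2 := by
    have hsplit : z' - w = v + α • g := by rw [hz', hv]; module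
    rw [hsplit, norm_add_sq_real, real_inner_smul_right, real_inner_comm, norm_smul, mul_pow,
      Real.norm_eq_abs, sq_abs]
    linear_combination ⟪g, v⟫ * hα + ‖g‖ ^ 2 / 2 * hα₂
  have hconvex : ‖v‖ ^ 2 ≤ (1 - θ) * ‖z - w‖ ^ 2 + θ * ‖y - w‖ ^ 2 :=
    norm_one_sub_smul_add_smul_sq_le hθ₀ hθ₁ _ _
  linear_combination hdescent + hdist + σ / 2 * hconvex

lemma coupled_iterates_mem {𝕜 E : Type*} [Ring 𝕜] [AddCommGroup E] [Module 𝕜 E]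
    {S : Submodule 𝕜 E} {x y z : ℕ → E} {a b c d e : 𝕜} (hx : ∀ k, x k ∈ S) (hz₀ : z 0 ∈ S)
    (hy : ∀ k, y k = a • x k + b • z k)
    (hz : ∀ k, z (k + 1) = c • z k + d • y k + e • (x (k + 1) - y k)) (k : ℕ) :
    z k ∈ S ∧ y k ∈ S := by
  have hy_mem {k : ℕ} (hzk : z k ∈ S) : y k ∈ S := by
    rw [hy]
    exact S.add_mem (S.smul_mem a (hx k)) (S.smul_mem b hzk)
  suffices hz_mem : z k ∈ S from ⟨hz_mem, hy_mem hz_mem⟩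
  induction k with
  | zero => exact hz₀
  | succ k ih =>
    rw [hz]
    exact S.add_mem (S.add_mem (S.smul_mem c ih) (S.smul_mem d (hy_mem ih)))
      (S.smul_mem e (S.sub_mem (hx _) (hy_mem ih)))

end Acceleration

lemma euclidean_norm_sq_le_sum_sq_mul {ι : Type*} [Fintype ι] {u : EuclideanSpace ℝ ι} {c : ι → ℝ}
    {a : ℝ} (h : ∀ i, |u i| ≤ c i * a) : ‖u‖ ^ 2 ≤ (∑ i, c i ^ 2) * a ^ 2 := by
  rw [EuclideanSpace.norm_sq_eq, Finset.sum_mul]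
  gcongr with i
  rw [← mul_pow]
  exact pow_le_pow_left₀ (norm_nonneg _) (h i) 2

theorem cfista_one_step_contraction_general
    {E G : Type*} [NormedAddCommGroup E] [InnerProductSpace ℝ E] [CompleteSpace E]
    [NormedAddCommGroup G] [InnerProductSpace ℝ G] [CompleteSpace G]
    {X : Set E} {H : G → ℝ} {B : E → G} {R F : E → ℝ} {μ L r τ ξ θ α : ℝ}
    (hH : Differentiable ℝ H) (hμ : 0 ≤ μ) (hL : 0 ≤ L)
    (hsc : ∀ u v, H v ≥ H u + ⟪gradient H u, v - u⟫ + μ / 2 * ‖v - u‖ ^ 2)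
    (hlip : ∀ u v, ‖gradient H u - gradient H v‖ ≤ L * ‖u - v‖)
    (hB : ∀ u ∈ Submodule.span ℝ X, DifferentiableAt ℝ B u)
    (hr : ∀ u ∈ Submodule.span ℝ X, ∀ v ∈ Submodule.span ℝ X,
      ‖B u - B v‖ ^ 2 ≤ r * ‖u - v‖ ^ 2)
    (hτ : ∀ u ∈ Submodule.span ℝ X, ∀ v ∈ Submodule.span ℝ X,
      τ * ‖u - v‖ ^ 2 ≤ ‖B u - B v‖ ^ 2)
    (hξ₀ : 0 ≤ ξ)
    (hξ : ∀ u ∈ Submodule.span ℝ X, ∀ v ∈ Submodule.span ℝ X,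
      |⟪gradient H (B u), (fderiv ℝ B v - fderiv ℝ B u) (v - u)⟫| ≤ ξ * ‖v - u‖ ^ 2)
    (hR : ConvexOn ℝ X R) (hF : ∀ u, F u = H (B u) + R u) (hgap : 0 < τ * μ - ξ)
    {w : E} (hw : w ∈ X)
    (hθ : θ = √((τ * μ - ξ) * (r * L - ξ)) / (r * L))
    (hα : α = √((r * L - ξ) / (τ * μ - ξ)))
    {x y z : ℕ → E} (hx : ∀ k, x k ∈ X) (hz₀ : z 0 ∈ X)
    (hy : ∀ k, y k = (1 / (1 + θ)) • x k + (θ / (1 + θ)) • z k)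
    (hmin : ∀ k, IsMinOn (proxModel (fun v => H (B v)) R (r * L) (y k)) X (x (k + 1)))
    (hz : ∀ k, z (k + 1) = (1 - θ) • z k + θ • y k + α • (x (k + 1) - y k)) (k : ℕ) :
    F (x (k + 1)) - F w + (τ * μ - ξ) / 2 * ‖z (k + 1) - w‖ ^ 2
      ≤ (1 - θ) * (F (x k) - F w + (τ * μ - ξ) / 2 * ‖z k - w‖ ^ 2) := by
  set S := Submodule.span ℝ X
  have hXS : X ⊆ S := Submodule.subset_span
  have hzy := coupled_iterates_mem (fun k => hXS (hx k)) (hXS hz₀) hy hz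
  rcases eq_or_ne S ⊥ with hS | hS
  · -- Here `r * L` may vanish, which makes `θ` a junk value, but all iterates are `0`.
    have eq_zero {u : E} (hu : u ∈ S) : u = 0 := by rwa [hS, Submodule.mem_bot] at hu
    simp [eq_zero (hXS (hx k)), eq_zero (hXS (hx (k + 1))), eq_zero (hXS hw),
      eq_zero (hzy k).1, eq_zero (hzy (k + 1)).1]
  obtain ⟨u, huS, hu⟩ := S.ne_bot_iff.1 hS
  have hM : τ * μ ≤ r * L := mul_strongConvexity_le_mul_lipschitz hH hμ hL hsc hlip
    (by rw [sub_zero]; positivity) (hτ u huS 0 S.zero_mem) (hr u huS 0 S.zero_mem)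
  have hyS : y k ∈ S := (hzy k).2
  have hstep {v : E} (hv : v ∈ X) : F (x (k + 1)) ≤ F v + r * L * ⟪x (k + 1) - y k, v - y k⟫
      - (r * L - ξ) / 2 * ‖x (k + 1) - y k‖ ^ 2 - (τ * μ - ξ) / 2 * ‖v - y k‖ ^ 2 := by
    rw [hF, hF]
    exact comp_add_le_of_isMinOn_proxModel hH hμ hL hsc hlip S.convex hXS hyS hB
      (fun u hu => hr u hu _ hyS) (fun u hu => hτ u hu _ hyS) (hξ _ hyS) hR (hmin k)
      (hx (k + 1)) hv
  obtain ⟨hθ₀, hθ₁, hα₁, hα₂⟩ :=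
    cfista_parameter_relations hgap hξ₀ (by rwa [sub_add_cancel]) hθ hα
  exact lyapunov_contraction hθ₀ hθ₁ hgap.le hα₁ hα₂ (hy k) (hz k) (hstep (hx k)) (hstep hw)

/-- Theorem 2.1 (one-step contraction of C-FISTA): under assumptions (A1)-(A3)
with `τ * μ - ξ > 0` and `H ∘ B` convex, each iteration of C-FISTA contracts the
Lyapunov quantity `F(x^k) - F(x*) + ((τμ-ξ)/2)‖z^k - x*‖²` by the factor
`1 - √((τμ-ξ)(rL-ξ))/(rL)`. -/
theorem cfista_one_step_contraction
    {n m : ℕ}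
    (X : Set (EuclideanSpace ℝ (Fin n)))
    (hXclosed : IsClosed X) (hXconvex : Convex ℝ X)
    (H : EuclideanSpace ℝ (Fin m) → ℝ)
    (hHdiff : Differentiable ℝ H)
    (μ L : ℝ) (hμ : 0 < μ) (hL : 0 < L)
    -- strong convexity of H with parameter μ
    (hHsc : ∀ u v, H v ≥ H u + ⟪gradient H u, v - u⟫ + μ / 2 * ‖v - u‖ ^ 2)
    -- L-Lipschitz gradient of H
    (hHlip : ∀ u v, ‖gradient H u - gradient H v‖ ≤ L * ‖u - v‖)
    (B : EuclideanSpace ℝ (Fin n) → EuclideanSpace ℝ (Fin m))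
    (Lbar : Fin m → ℝ) (hLbar : ∀ i, 0 ≤ Lbar i)
    -- (A1): each component of B is C², convex, and Lipschitz with constant L̄ᵢ
    (hA1smooth : ∀ i, ContDiff ℝ 2 (fun x => B x i))
    (hA1convex : ∀ i, ConvexOn ℝ Set.univ (fun x => B x i))
    (hA1lip : ∀ i, ∀ x y, |B x i - B y i| ≤ Lbar i * ‖x - y‖)
    (r : ℝ) (hr : r = ∑ i, Lbar i ^ 2)
    -- (A2)
    (τ : ℝ) (hτ : 0 < τ)
    (hA2 : ∀ x ∈ Submodule.span ℝ X, ∀ y ∈ Submodule.span ℝ X,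
      τ * ‖x - y‖ ^ 2 ≤ ‖B x - B y‖ ^ 2)
    -- (A3)
    (ξ : ℝ) (hξ : 0 ≤ ξ)
    (hA3 : ∀ x' ∈ Submodule.span ℝ X, ∀ x'' ∈ Submodule.span ℝ X,
      |⟪gradient H (B x'), (fderiv ℝ B x'' - fderiv ℝ B x') (x'' - x')⟫|
        ≤ ξ * ‖x'' - x'‖ ^ 2)
    (R : EuclideanSpace ℝ (Fin n) → ℝ) (hR : ConvexOn ℝ Set.univ R)
    (F : EuclideanSpace ℝ (Fin n) → ℝ) (hF : ∀ x, F x = H (B x) + R x)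
    (hHB : ConvexOn ℝ Set.univ (fun x => H (B x)))
    (hgap : 0 < τ * μ - ξ)
    (xstar : EuclideanSpace ℝ (Fin n)) (hxstarX : xstar ∈ X)
    (hxstar : ∀ w ∈ X, F xstar ≤ F w)
    (θ α : ℝ)
    (hθ : θ = Real.sqrt ((τ * μ - ξ) * (r * L - ξ)) / (r * L))
    (hα : α = Real.sqrt ((r * L - ξ) / (τ * μ - ξ)))
    (x z y : ℕ → EuclideanSpace ℝ (Fin n))
    (hx0 : x 0 ∈ X) (hz0 : z 0 ∈ X)
    (hy : ∀ k, y k = (1 / (1 + θ)) • x k + (θ / (1 + θ)) • z k)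
    -- x^{k+1} minimizes the proximal subproblem over X
    (hxmem : ∀ k, x (k + 1) ∈ X)
    (hxmin : ∀ k, ∀ w ∈ X,
      H (B (y k)) + ⟪gradient (fun v => H (B v)) (y k), x (k + 1) - y k⟫
          + r * L / 2 * ‖x (k + 1) - y k‖ ^ 2 + R (x (k + 1))
        ≤ H (B (y k)) + ⟪gradient (fun v => H (B v)) (y k), w - y k⟫
          + r * L / 2 * ‖w - y k‖ ^ 2 + R w)
    (hz : ∀ k, z (k + 1) = (1 - θ) • z k + θ • y k + α • (x (k + 1) - y k)) :
    ∀ k : ℕ,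
      F (x (k + 1)) - F xstar + (τ * μ - ξ) / 2 * ‖z (k + 1) - xstar‖ ^ 2
        ≤ (1 - Real.sqrt ((τ * μ - ξ) * (r * L - ξ)) / (r * L))
          * (F (x k) - F xstar + (τ * μ - ξ) / 2 * ‖z k - xstar‖ ^ 2) := by
  have hB : Differentiable ℝ B :=
    differentiable_euclidean.2 fun i => (hA1smooth i).differentiable two_ne_zero
  have hBlip (u v) : ‖B u - B v‖ ^ 2 ≤ r * ‖u - v‖ ^ 2 :=
    hr ▸ euclidean_norm_sq_le_sum_sq_mul fun i => hA1lip i u v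
  have hx (k : ℕ) : x k ∈ X := k.casesOn hx0 hxmem
  exact hθ ▸ cfista_one_step_contraction_general hHdiff hμ.le hL.le hHsc hHlip (fun u _ => hB u)
    (fun u _ v _ => hBlip u v) hA2 hξ hA3 (hR.subset X.subset_univ hXconvex) hF hgap hxstarX
    hθ hα hx hz0 hy (fun k => isMinOn_iff.2 (hxmin k)) hz
end

section
/- Let H : ℝⁿ → ℝ be differentiable, μ-strongly convex with μ > 0, with L-Lipschitz gradient, let R : ℝⁿ → ℝ be convex, set F := H + R, and let x* minimize F over a closed convex set X ⊆ ℝⁿ. With θ := √(μ/L) and α := √(L/μ), the iterates defined by y^k = (1/(1+θ))x^k + (θ/(1+θ))z^k, x^{k+1} = argmin_{x∈X}[H(y^k) + ∇H(y^k)ᵀ(x − y^k) + (L/2)‖x − y^k‖² + R(x)], z^{k+1} = (1−θ)z^k + θy^k + α(x^{k+1} − y^k), starting from (x⁰, z⁰) ∈ X × X, satisfy F(x^k) − F(x*) ≤ (1 − √(μ/L))^k ( F(x⁰) − F(x*) + (μ/2)‖z⁰ − x*‖² ). -/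
open scoped RealInnerProductSpace

/-!
Fix a comparison point `u` in `X`. Since `α = θ⁻¹`, the `z`-update is the extrapolation
`θ • z (k + 1) = x (k + 1) - (1 - θ) • x k`, so for `w = (1 - θ) • x k + θ • u` and
`μ = L * θ ^ 2` we have `μ * ‖z (k + 1) - u‖ ^ 2 = L * ‖w - x (k + 1)‖ ^ 2`. Moreover `x (k + 1)`
minimizes an `L`-strongly convex model of `F`, which lies below `F w + (L - μ) / 2 * ‖w - y k‖ ^ 2`
at `w` and, by the descent lemma, above `F` at `x (k + 1)`; hence
`F (x (k + 1)) + L / 2 * ‖w - x (k + 1)‖ ^ 2 ≤ F w + (L - μ) / 2 * ‖w - y k‖ ^ 2`.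
Strong convexity of `F` bounds `F w`, and its negative term `-(1 - θ) * θ * (μ / 2) * ‖x k - u‖ ^ 2`
absorbs what the last term contributes beyond `(1 - θ) * (μ / 2) * ‖z k - u‖ ^ 2`. The potential
`F (x k) - F u + μ / 2 * ‖z k - u‖ ^ 2` therefore contracts by the factor `1 - θ`.
-/

open Filter Topology in
theorem add_modulus_le_of_isMinOn {E : Type*} [NormedAddCommGroup E] [NormedSpace ℝ E]
    {s : Set E} {φ : ℝ → ℝ} {f : E → ℝ} {p w : E} (hf : UniformConvexOn s φ f)
    (hmin : IsMinOn f s p) (hp : p ∈ s) (hw : w ∈ s) :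
    f p + φ ‖w - p‖ ≤ f w := by
  have partial_growth : ∀ a ∈ Set.Ioo (0 : ℝ) 1, f p + a * φ ‖w - p‖ ≤ f w := by
    intro a ha
    have hb : 0 < 1 - a := sub_pos.2 ha.2
    have hab : 1 - a + a = 1 := sub_add_cancel 1 a
    have hle : f p ≤ (1 - a) * f w + a * f p - (1 - a) * a * φ ‖w - p‖ :=
      (hmin (hf.1 hw hp hb.le ha.1.le hab)).trans (hf.2 hw hp hb.le ha.1.le hab)
    refine le_of_mul_le_mul_left ?_ hb
    linarith
  have hlim : Tendsto (fun a : ℝ => f p + a * φ ‖w - p‖) (𝓝[<] 1) (𝓝 (f p + 1 * φ ‖w - p‖)) :=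
    (Continuous.tendsto (by fun_prop) 1).mono_left nhdsWithin_le_nhds
  rw [one_mul] at hlim
  exact le_of_tendsto hlim
    (eventually_of_mem (Ioo_mem_nhdsLT zero_lt_one) partial_growth)

section InnerProductSpace

variable {E : Type*} [NormedAddCommGroup E] [InnerProductSpace ℝ E]

theorem strongConvexOn_of_forall_add_inner_add_sq_le {s : Set E} (hs : Convex ℝ s) {f : E → ℝ}
    {g : E → E} {μ : ℝ}
    (h : ∀ u ∈ s, ∀ v ∈ s, f u + ⟪g u, v - u⟫ + μ / 2 * ‖v - u‖ ^ 2 ≤ f v) :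
    StrongConvexOn s μ f := by
  refine ⟨hs, fun u hu v hv a b ha hb hab => ?_⟩
  set m := a • u + b • v with hm
  have hms : m ∈ s := hs hu hv ha hb hab
  have hum : u - m = b • (u - v) := by
    rw [hm]; linear_combination (norm := module) -(hab • u)
  have hvm : v - m = -(a • (u - v)) := by
    rw [hm]; linear_combination (norm := module) -(hab • v)
  have hfu := h m hms u hu
  have hfv := h m hms v hv
  rw [hum, inner_smul_right, norm_smul, mul_pow, Real.norm_of_nonneg hb] at hfu
  rw [hvm, inner_neg_right, inner_smul_right, norm_neg, norm_smul, mul_pow,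
    Real.norm_of_nonneg ha] at hfv
  obtain rfl := eq_sub_of_add_eq hab
  simp only [smul_eq_mul]
  linear_combination (1 - b) * hfu + b * hfv

theorem strongConvexity_le_smoothness [Nontrivial E] {f : E → ℝ} {g : E → E} {μ L : ℝ}
    (hlower : ∀ u v, f u + ⟪g u, v - u⟫ + μ / 2 * ‖v - u‖ ^ 2 ≤ f v)
    (hupper : ∀ u v, f v ≤ f u + ⟪g u, v - u⟫ + L / 2 * ‖v - u‖ ^ 2) :
    μ ≤ L := by
  obtain ⟨v, u, hvu⟩ := exists_pair_ne E
  have hpos : 0 < ‖v - u‖ ^ 2 := pow_pos (norm_pos_iff.2 (sub_ne_zero.2 hvu)) 2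
  refine le_of_mul_le_mul_right ?_ hpos
  linarith [hlower u v, hupper u v]

theorem norm_add_smul_sq_le {θ : ℝ} (hθ : 0 ≤ θ) (a b : E) :
    ‖a + θ • b‖ ^ 2 ≤ (1 + θ) * (‖a‖ ^ 2 + θ * ‖b‖ ^ 2) := by
  have hgap : 0 ≤ θ * ‖a - b‖ ^ 2 := by positivity
  rw [norm_sub_sq_real] at hgap
  rw [norm_add_sq_real, inner_smul_right, norm_smul, mul_pow, Real.norm_of_nonneg hθ]
  linarith

theorem norm_combo_sub_sq_le {θ : ℝ} (hθ : 0 ≤ θ) {x y z : E}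
    (hy : (1 + θ) • y = x + θ • z) (u : E) :
    (1 + θ) * ‖(1 - θ) • x + θ • u - y‖ ^ 2 ≤ θ ^ 2 * (‖z - u‖ ^ 2 + θ * ‖x - u‖ ^ 2) := by
  have hpos : 0 < 1 + θ := by positivity
  have hvec : (1 + θ) • ((1 - θ) • x + θ • u - y) = -(θ • ((z - u) + θ • (x - u))) := by
    linear_combination (norm := module) -hy
  have hnorm : (1 + θ) ^ 2 * ‖(1 - θ) • x + θ • u - y‖ ^ 2
      = θ ^ 2 * ‖(z - u) + θ • (x - u)‖ ^ 2 := by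
    have := congrArg (fun e => ‖e‖ ^ 2) hvec
    simpa only [norm_neg, norm_smul, mul_pow, Real.norm_eq_abs, sq_abs] using this
  refine le_of_mul_le_mul_left ?_ hpos
  linear_combination hnorm + θ ^ 2 * norm_add_smul_sq_le hθ (z - u) (x - u)

theorem smul_gfista_update_eq {θ : ℝ} (hθ : θ ≠ 0) {x y z p : E}
    (hy : (1 + θ) • y = x + θ • z) :
    θ • ((1 - θ) • z + θ • y + θ⁻¹ • (p - y)) = p - (1 - θ) • x := by
  rw [smul_add, smul_inv_smul₀ hθ]
  linear_combination (norm := module) -((1 - θ) • hy)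

/-- The Lyapunov function of the accelerated iteration: the gap of `F` at the main iterate `x`
to a comparison point `u`, plus the weighted squared distance of the auxiliary iterate `z` to `u`.
The point `u` need not be a minimizer, so the value may be negative. -/
noncomputable def gfistaPotential (F : E → ℝ) (μ : ℝ) (u x z : E) : ℝ :=
  F x - F u + μ / 2 * ‖z - u‖ ^ 2

theorem gfistaPotential_step_le {X : Set E} {F : E → ℝ} {μ L θ : ℝ}
    (hF : StrongConvexOn X μ F) (hL : 0 ≤ L) (hθ₀ : 0 ≤ θ) (hθ₁ : θ ≤ 1)
    (hμ : μ = L * θ ^ 2) {x u y z p z' : E} (hx : x ∈ X) (hu : u ∈ X)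
    (hy : (1 + θ) • y = x + θ • z) (hz' : θ • z' = p - (1 - θ) • x)
    (hp : ∀ w ∈ X, F p + L / 2 * ‖w - p‖ ^ 2 ≤ F w + (L - μ) / 2 * ‖w - y‖ ^ 2) :
    gfistaPotential F μ u p z' ≤ (1 - θ) * gfistaPotential F μ u x z := by
  have hθ' : 0 ≤ 1 - θ := sub_nonneg.2 hθ₁
  have hsum : 1 - θ + θ = 1 := sub_add_cancel 1 θ
  set w := (1 - θ) • x + θ • u with hw
  have hz'_dist : μ * ‖z' - u‖ ^ 2 = L * ‖w - p‖ ^ 2 := by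
    have hvec : w - p = -(θ • (z' - u)) := by
      rw [hw]; linear_combination (norm := module) hz'
    rw [hvec, norm_neg, norm_smul, mul_pow, Real.norm_of_nonneg hθ₀, hμ]
    ring
  have hFw : F w ≤ (1 - θ) * F x + θ * F u - (1 - θ) * θ * (μ / 2 * ‖x - u‖ ^ 2) :=
    hF.2 hx hu hθ' hθ₀ hsum
  have hdist : (L - μ) / 2 * ‖w - y‖ ^ 2
      ≤ (1 - θ) * (μ / 2) * (‖z - u‖ ^ 2 + θ * ‖x - u‖ ^ 2) :=
    calc (L - μ) / 2 * ‖w - y‖ ^ 2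
        = L * (1 - θ) / 2 * ((1 + θ) * ‖w - y‖ ^ 2) := by rw [hμ]; ring
      _ ≤ L * (1 - θ) / 2 * (θ ^ 2 * (‖z - u‖ ^ 2 + θ * ‖x - u‖ ^ 2)) :=
        mul_le_mul_of_nonneg_left (norm_combo_sub_sq_le hθ₀ hy u) (by positivity)
      _ = (1 - θ) * (μ / 2) * (‖z - u‖ ^ 2 + θ * ‖x - u‖ ^ 2) := by rw [hμ]; ring
  unfold gfistaPotential
  linarith [hp w (hF.1 hx hu hθ' hθ₀ hsum)]

end InnerProductSpace

section Gradient

variable {E : Type*} [NormedAddCommGroup E] [InnerProductSpace ℝ E] [CompleteSpace E]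

theorem le_add_inner_gradient_add_sq_of_lipschitz {f : E → ℝ} (hf : Differentiable ℝ f) {L : ℝ}
    (hlip : ∀ u v, ‖gradient f u - gradient f v‖ ≤ L * ‖u - v‖) (u v : E) :
    f v ≤ f u + ⟪gradient f u, v - u⟫ + L / 2 * ‖v - u‖ ^ 2 := by
  set d := v - u
  set γ : ℝ →ᵃ[ℝ] E := AffineMap.lineMap u v with hγ
  have hγd : ∀ t, γ t - u = t • d := fun t => by
    rw [hγ, AffineMap.lineMap_apply_module', add_sub_cancel_right]
  have hderiv : ∀ t, HasDerivAt (f ∘ γ) ⟪gradient f (γ t), d⟫ t := fun t => by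
    rw [inner_gradient_left]
    exact (hf (γ t)).hasFDerivAt.comp_hasDerivAt t AffineMap.hasDerivAt_lineMap
  have hbound : ∀ t : ℝ, HasDerivAt
      (fun t => f u + t * ⟪gradient f u, d⟫ + L / 2 * ‖d‖ ^ 2 * t ^ 2)
      (⟪gradient f u, d⟫ + L * ‖d‖ ^ 2 * t) t := fun t => by
    refine HasDerivAt.congr_deriv ((((hasDerivAt_id t).mul_const _).const_add (f u)).add
      ((hasDerivAt_pow 2 t).const_mul (L / 2 * ‖d‖ ^ 2))) ?_
    push_cast
    ring
  have hslope : ∀ t ∈ Set.Ico (0 : ℝ) 1,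
      ⟪gradient f (γ t), d⟫ ≤ ⟪gradient f u, d⟫ + L * ‖d‖ ^ 2 * t := by
    intro t ht
    have hgrad : ⟪gradient f (γ t) - gradient f u, d⟫ ≤ L * ‖d‖ ^ 2 * t :=
      calc ⟪gradient f (γ t) - gradient f u, d⟫
          ≤ ‖gradient f (γ t) - gradient f u‖ * ‖d‖ := real_inner_le_norm _ _
        _ ≤ L * ‖γ t - u‖ * ‖d‖ := by gcongr; exact hlip _ _
        _ = L * ‖d‖ ^ 2 * t := by
          rw [hγd, norm_smul, Real.norm_of_nonneg ht.1]; ring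
    rw [inner_sub_left] at hgrad
    linarith
  have hend := image_le_of_deriv_right_le_deriv_boundary (a := 0) (b := 1)
    (fun t _ => (hderiv t).continuousAt.continuousWithinAt)
    (fun t _ => (hderiv t).hasDerivWithinAt) (by simp [hγ])
    (fun t _ => (hbound t).continuousAt.continuousWithinAt)
    (fun t _ => (hbound t).hasDerivWithinAt) hslope (Set.right_mem_Icc.2 zero_le_one)
  simpa [hγ] using hend

/-- The objective of the proximal gradient step from `y` with step size `1 / L` for the composite
function `H + R`: the linearization of `H` at `y`, a quadratic penalty, and `R` itself. -/
noncomputable def proxGradModel (H R : E → ℝ) (L : ℝ) (y w : E) : ℝ :=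
  H y + ⟪gradient H y, w - y⟫ + L / 2 * ‖w - y‖ ^ 2 + R w

theorem strongConvexOn_proxGradModel {X : Set E} {R : E → ℝ} (hR : ConvexOn ℝ X R)
    (H : E → ℝ) (L : ℝ) (y : E) :
    StrongConvexOn X L (proxGradModel H R L y) := by
  rw [strongConvexOn_iff_convex]
  have haffine := ((innerSL ℝ (gradient H y - L • y)).toLinearMap.convexOn hR.1).add_const
    (H y - ⟪gradient H y, y⟫ + L / 2 * ‖y‖ ^ 2)
  refine (hR.add haffine).congr fun w _ => ?_
  simp only [proxGradModel, Pi.add_apply, ContinuousLinearMap.coe_coe, innerSL_apply_apply,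
    inner_sub_left, inner_sub_right, real_inner_smul_left, norm_sub_sq_real,
    real_inner_comm y w]
  ring

theorem proxGradStep_le {X : Set E} {H R : E → ℝ} (hR : ConvexOn ℝ X R) {μ L : ℝ} {y p w : E}
    (hlower : H y + ⟪gradient H y, w - y⟫ + μ / 2 * ‖w - y‖ ^ 2 ≤ H w)
    (hupper : H p ≤ H y + ⟪gradient H y, p - y⟫ + L / 2 * ‖p - y‖ ^ 2)
    (hmin : IsMinOn (proxGradModel H R L y) X p) (hp : p ∈ X) (hw : w ∈ X) :
    (H + R) p + L / 2 * ‖w - p‖ ^ 2 ≤ (H + R) w + (L - μ) / 2 * ‖w - y‖ ^ 2 :=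
  calc
    (H + R) p + L / 2 * ‖w - p‖ ^ 2
        ≤ proxGradModel H R L y p + L / 2 * ‖w - p‖ ^ 2 := by
      simp only [proxGradModel, Pi.add_apply]
      linarith
    _ ≤ proxGradModel H R L y w :=
      add_modulus_le_of_isMinOn (strongConvexOn_proxGradModel hR H L y) hmin hp hw
    _ ≤ (H + R) w + (L - μ) / 2 * ‖w - y‖ ^ 2 := by
      simp only [proxGradModel, Pi.add_apply]
      linarith

theorem gfista_linear_convergence_general {X : Set E} {H R : E → ℝ} (hH : Differentiable ℝ H)
    {μ L : ℝ} (hμ : 0 < μ) (hL : 0 < L)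
    (hHsc : ∀ u v, H u + ⟪gradient H u, v - u⟫ + μ / 2 * ‖v - u‖ ^ 2 ≤ H v)
    (hHlip : ∀ u v, ‖gradient H u - gradient H v‖ ≤ L * ‖u - v‖) (hR : ConvexOn ℝ X R)
    {u : E} (hu : u ∈ X) {θ α : ℝ} (hθ : θ = √(μ / L)) (hα : α = √(L / μ)) {x z y : ℕ → E}
    (hx₀ : x 0 ∈ X) (hy : ∀ k, y k = (1 / (1 + θ)) • x k + (θ / (1 + θ)) • z k)
    (hxmem : ∀ k, x (k + 1) ∈ X)
    (hxmin : ∀ k, IsMinOn (proxGradModel H R L (y k)) X (x (k + 1)))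
    (hz : ∀ k, z (k + 1) = (1 - θ) • z k + θ • y k + α • (x (k + 1) - y k)) (k : ℕ) :
    gfistaPotential (H + R) μ u (x k) (z k)
      ≤ (1 - √(μ / L)) ^ k * gfistaPotential (H + R) μ u (x 0) (z 0) := by
  rcases subsingleton_or_nontrivial E with _ | _
  · simp [gfistaPotential, Subsingleton.elim (x _) u, Subsingleton.elim (z _) u]
  have hdescent := le_add_inner_gradient_add_sq_of_lipschitz hH hHlip
  have hμL : μ ≤ L := strongConvexity_le_smoothness hHsc hdescent
  have hθ₀ : 0 < θ := hθ ▸ Real.sqrt_pos.2 (div_pos hμ hL)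
  have hθ₁ : θ ≤ 1 := hθ ▸ Real.sqrt_le_one.2 ((div_le_one hL).2 hμL)
  have hμθ : μ = L * θ ^ 2 := by
    rw [hθ, Real.sq_sqrt (div_pos hμ hL).le, mul_div_cancel₀ _ hL.ne']
  have hαθ : α = θ⁻¹ := by rw [hα, hθ, ← Real.sqrt_inv, inv_div]
  have hy' : ∀ k, (1 + θ) • y k = x k + θ • z k := fun k => by
    have hne : 1 + θ ≠ 0 := by positivity
    rw [hy, smul_add, smul_smul, smul_smul, mul_one_div_cancel hne, mul_div_cancel₀ _ hne,
      one_smul]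
  have hx : ∀ k, x k ∈ X := fun k => k.casesOn hx₀ hxmem
  have hF : StrongConvexOn X μ (H + R) := by
    have hH_strong := strongConvexOn_of_forall_add_inner_add_sq_le hR.1 fun u _ v _ => hHsc u v
    simpa [StrongConvexOn] using! hH_strong.add (uniformConvexOn_zero.2 hR)
  rw [← hθ]
  refine le_geom (u := fun k => gfistaPotential (H + R) μ u (x k) (z k))
    (sub_nonneg.2 hθ₁) k fun j _ => ?_
  refine gfistaPotential_step_le hF hL.le hθ₀.le hθ₁ hμθ (hx j) hu (hy' j) ?_ fun w hw =>
    proxGradStep_le hR (hHsc _ w) (hdescent _ _) (hxmin j) (hxmem j) hw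
  rw [hz, hαθ]
  exact smul_gfista_update_eq hθ₀.ne' (hy' j)

end Gradient

/-- Remark 2.3 (GFISTA, the special case `B(x) = x` of C-FISTA): for `F = H + R`
with `H` `μ`-strongly convex with `L`-Lipschitz gradient and `R` convex, the
iterates with `θ = √(μ/L)`, `α = √(L/μ)` satisfy
`F(x^k) - F(x*) ≤ (1 - √(μ/L))^k (F(x⁰) - F(x*) + (μ/2)‖z⁰ - x*‖²)`. -/
theorem gfista_linear_convergence
    {n : ℕ}
    (X : Set (EuclideanSpace ℝ (Fin n)))
    (hXclosed : IsClosed X) (hXconvex : Convex ℝ X)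
    (H : EuclideanSpace ℝ (Fin n) → ℝ)
    (hHdiff : Differentiable ℝ H)
    (μ L : ℝ) (hμ : 0 < μ) (hL : 0 < L)
    (hHsc : ∀ u v, H v ≥ H u + ⟪gradient H u, v - u⟫ + μ / 2 * ‖v - u‖ ^ 2)
    (hHlip : ∀ u v, ‖gradient H u - gradient H v‖ ≤ L * ‖u - v‖)
    (R : EuclideanSpace ℝ (Fin n) → ℝ) (hR : ConvexOn ℝ Set.univ R)
    (F : EuclideanSpace ℝ (Fin n) → ℝ) (hF : ∀ x, F x = H x + R x)
    (xstar : EuclideanSpace ℝ (Fin n)) (hxstarX : xstar ∈ X)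
    (hxstar : ∀ w ∈ X, F xstar ≤ F w)
    (θ α : ℝ) (hθ : θ = Real.sqrt (μ / L)) (hα : α = Real.sqrt (L / μ))
    (x z y : ℕ → EuclideanSpace ℝ (Fin n))
    (hx0 : x 0 ∈ X) (hz0 : z 0 ∈ X)
    (hy : ∀ k, y k = (1 / (1 + θ)) • x k + (θ / (1 + θ)) • z k)
    (hxmem : ∀ k, x (k + 1) ∈ X)
    (hxmin : ∀ k, ∀ w ∈ X,
      H (y k) + ⟪gradient H (y k), x (k + 1) - y k⟫
          + L / 2 * ‖x (k + 1) - y k‖ ^ 2 + R (x (k + 1))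
        ≤ H (y k) + ⟪gradient H (y k), w - y k⟫
          + L / 2 * ‖w - y k‖ ^ 2 + R w)
    (hz : ∀ k, z (k + 1) = (1 - θ) • z k + θ • y k + α • (x (k + 1) - y k)) :
    ∀ k : ℕ,
      F (x k) - F xstar
        ≤ (1 - Real.sqrt (μ / L)) ^ k
          * (F (x 0) - F xstar + μ / 2 * ‖z 0 - xstar‖ ^ 2) := by
  obtain rfl : F = H + R := funext hF
  exact fun k => (le_add_of_nonneg_right (by positivity)).trans <|
    gfista_linear_convergence_general hHdiff hμ hL hHsc hHlip
      (hR.subset (Set.subset_univ X) hXconvex) hxstarX hθ hα hx0 hy hxmem hxmin hz k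
end

section
/- For d ∈ ℝⁿ and γ₁, γ₂ ≥ 0, define c ∈ ℝⁿ componentwise by c_i = d_i + Th_{γ₂}(−d_i), where Th_{γ₂}(t) is the clamp of t to [−γ₂, γ₂]. Then the function x ↦ (1/2)‖x − d‖² + γ₁‖x‖ + γ₂‖x‖₁ attains its minimum over ℝⁿ at x* = 0 if ‖c‖ ≤ γ₁, and at x* = ((‖c‖ − γ₁)/‖c‖) c if ‖c‖ > γ₁. -/
/-!
The vector `c` is the proximal point of `γ₂‖·‖₁` at `d`, so `d - c` is a subgradient of `γ₂‖·‖₁`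
at `c`; by homogeneity it remains one at every multiple `a • c` with `a ≥ 0`. The proximal point of
`γ₁‖·‖` at `c` is such a multiple, and adding a function with subgradient `d - c` there merely moves
the centre of the quadratic term from `c` to `d`. The proximal point of `γ‖·‖` at a vector `v` is
found from `(‖x‖ - ‖v‖)² ≤ ‖x - v‖²`, which reduces the problem to a parabola in `‖x‖`.
-/

theorem sq_norm_sub_norm_le {E : Type*} [SeminormedAddCommGroup E] (x y : E) :
    (‖x‖ - ‖y‖) ^ 2 ≤ ‖x - y‖ ^ 2 :=
  sq_le_sq.2 <| by simpa only [abs_norm] using abs_norm_sub_norm_le x y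

section GroupSoftThreshold

variable {E : Type*} [SeminormedAddCommGroup E] {v : E} {γ : ℝ}

theorem isMinOn_half_sq_norm_sub_add_mul_norm_zero (h : ‖v‖ ≤ γ) :
    IsMinOn (fun x : E ↦ 1 / 2 * ‖x - v‖ ^ 2 + γ * ‖x‖) Set.univ 0 := by
  refine isMinOn_univ_iff.2 fun x ↦ ?_
  have radial := sq_norm_sub_norm_le x v
  simp only [zero_sub, norm_neg, norm_zero]
  nlinarith [mul_nonneg (norm_nonneg x) (sub_nonneg.2 h), sq_nonneg ‖x‖]

variable [NormedSpace ℝ E]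

theorem isMinOn_half_sq_norm_sub_add_mul_norm_smul (hv : ‖v‖ ≠ 0) (h : γ ≤ ‖v‖) :
    IsMinOn (fun x : E ↦ 1 / 2 * ‖x - v‖ ^ 2 + γ * ‖x‖) Set.univ (((‖v‖ - γ) / ‖v‖) • v) := by
  have norm_min : ‖((‖v‖ - γ) / ‖v‖) • v‖ = ‖v‖ - γ := by
    rw [norm_smul, Real.norm_of_nonneg (div_nonneg (sub_nonneg.2 h) (norm_nonneg v)),
      div_mul_cancel₀ _ hv]
  have dist_min : ‖((‖v‖ - γ) / ‖v‖) • v - v‖ = |γ| := by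
    have : ((‖v‖ - γ) / ‖v‖) • v - v = (-γ / ‖v‖) • v := by
      rw [sub_div, div_self hv, neg_div]
      module
    rw [this, norm_smul, Real.norm_eq_abs, abs_div, abs_neg, abs_norm, div_mul_cancel₀ _ hv]
  refine isMinOn_univ_iff.2 fun x ↦ ?_
  calc 1 / 2 * ‖((‖v‖ - γ) / ‖v‖) • v - v‖ ^ 2 + γ * ‖((‖v‖ - γ) / ‖v‖) • v‖
      = 1 / 2 * γ ^ 2 + γ * (‖v‖ - γ) := by rw [norm_min, dist_min, sq_abs]
    _ ≤ 1 / 2 * γ ^ 2 + γ * (‖v‖ - γ) + 1 / 2 * (‖x‖ - (‖v‖ - γ)) ^ 2 :=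
      le_add_of_nonneg_right (by positivity)
    _ = 1 / 2 * (‖x‖ - ‖v‖) ^ 2 + γ * ‖x‖ := by ring
    _ ≤ 1 / 2 * ‖x - v‖ ^ 2 + γ * ‖x‖ := by linarith [sq_norm_sub_norm_le x v]

/-- The group (or block) soft-thresholding operator: the proximal map of `γ * ‖·‖` for
`0 ≤ γ`. -/
noncomputable def groupSoftThreshold (γ : ℝ) (v : E) : E :=
  if ‖v‖ ≤ γ then 0 else ((‖v‖ - γ) / ‖v‖) • v

theorem isMinOn_groupSoftThreshold (hγ : ‖v‖ = 0 → 0 ≤ γ) :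
    IsMinOn (fun x : E ↦ 1 / 2 * ‖x - v‖ ^ 2 + γ * ‖x‖) Set.univ (groupSoftThreshold γ v) := by
  unfold groupSoftThreshold
  split_ifs with h
  · exact isMinOn_half_sq_norm_sub_add_mul_norm_zero h
  · have hv : ‖v‖ ≠ 0 := fun hv ↦ h (hv.trans_le (hγ hv))
    exact isMinOn_half_sq_norm_sub_add_mul_norm_smul hv (not_le.1 h).le

theorem exists_nonneg_groupSoftThreshold_eq_smul (γ : ℝ) (v : E) :
    ∃ a : ℝ, 0 ≤ a ∧ groupSoftThreshold γ v = a • v := by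
  unfold groupSoftThreshold
  split_ifs with h
  · exact ⟨0, le_rfl, (zero_smul ℝ v).symm⟩
  · exact ⟨_, div_nonneg (sub_nonneg.2 (not_le.1 h).le) (norm_nonneg v), rfl⟩

end GroupSoftThreshold

theorem isMinOn_half_sq_norm_sub_add_add_of_subgradient {E : Type*} [SeminormedAddCommGroup E]
    [InnerProductSpace ℝ E] {s : Set E} {φ p : E → ℝ} {c d x₀ : E}
    (hmin : IsMinOn (fun x ↦ 1 / 2 * ‖x - c‖ ^ 2 + φ x) s x₀)
    (hsub : ∀ x ∈ s, p x₀ + inner ℝ (d - c) (x - x₀) ≤ p x) :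
    IsMinOn (fun x ↦ 1 / 2 * ‖x - d‖ ^ 2 + φ x + p x) s x₀ := by
  have recentre (x : E) :
      ‖x - d‖ ^ 2 = ‖x - c‖ ^ 2 - 2 * inner ℝ (d - c) (x - c) + ‖d - c‖ ^ 2 := by
    rw [← sub_sub_sub_cancel_right x d c, norm_sub_sq_real, real_inner_comm]
  refine isMinOn_iff.2 fun x hx ↦ ?_
  have hinner : inner ℝ (d - c) (x - c) - inner ℝ (d - c) (x₀ - c) =
      inner ℝ (d - c) (x - x₀) := by
    rw [← inner_sub_right, sub_sub_sub_cancel_right]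
  have hle := isMinOn_iff.1 hmin x hx
  rw [recentre x, recentre x₀]
  linarith [hsub x hx]

section SoftThreshold

variable {γ a : ℝ}

/-- The soft-thresholding operator on `ℝ`: the proximal map of `γ * |·|` for `0 ≤ γ`, written as
`t` minus its clamp to `[-γ, γ]`. -/
noncomputable def softThreshold (γ t : ℝ) : ℝ :=
  t - max (-γ) (min t γ)

theorem add_ite_neg_eq_softThreshold (hγ : 0 ≤ γ) (t : ℝ) :
    t + (if -t < -γ then -γ else if -t ≤ γ then -t else γ) = softThreshold γ t := by
  unfold softThreshold
  grind

theorem abs_sub_softThreshold_le (hγ : 0 ≤ γ) (t : ℝ) : |t - softThreshold γ t| ≤ γ := by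
  rw [softThreshold, sub_sub_cancel, abs_le]
  exact ⟨le_max_left _ _, max_le (neg_le_self hγ) (min_le_right _ _)⟩

theorem sub_softThreshold_mul_softThreshold (hγ : 0 ≤ γ) (t : ℝ) :
    (t - softThreshold γ t) * softThreshold γ t = γ * |softThreshold γ t| := by
  rcases lt_or_ge t (-γ) with hneg | hge
  · have hs : softThreshold γ t = t + γ := by unfold softThreshold; grind
    rw [hs, abs_of_neg (by linarith)]
    ring
  rcases le_or_gt t γ with hle | hpos
  · have hs : softThreshold γ t = 0 := by unfold softThreshold; grind
    simp [hs]
  · have hs : softThreshold γ t = t - γ := by unfold softThreshold; grind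
    rw [hs, abs_of_pos (by linarith)]
    ring

theorem mul_abs_add_sub_softThreshold_mul_le (hγ : 0 ≤ γ) (ha : 0 ≤ a) (t y : ℝ) :
    γ * |a * softThreshold γ t| + (t - softThreshold γ t) * (y - a * softThreshold γ t) ≤
      γ * |y| := by
  calc γ * |a * softThreshold γ t| + (t - softThreshold γ t) * (y - a * softThreshold γ t)
      = (t - softThreshold γ t) * y := by
        rw [abs_mul, abs_of_nonneg ha]
        linear_combination -a * sub_softThreshold_mul_softThreshold hγ t
    _ ≤ |t - softThreshold γ t| * |y| := by
        rw [← abs_mul]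
        exact le_abs_self _
    _ ≤ γ * |y| := by
        gcongr
        exact abs_sub_softThreshold_le hγ t

variable {ι : Type*}

/-- Coordinatewise soft-thresholding: the proximal map of `γ * ‖·‖₁` on Euclidean space for
`0 ≤ γ`. -/
noncomputable def coordSoftThreshold (γ : ℝ) (d : EuclideanSpace ℝ ι) : EuclideanSpace ℝ ι :=
  WithLp.toLp 2 fun i ↦ softThreshold γ (d i)

theorem mul_sum_abs_add_inner_sub_coordSoftThreshold_le [Fintype ι] (hγ : 0 ≤ γ) (ha : 0 ≤ a)
    (d x : EuclideanSpace ℝ ι) :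
    γ * ∑ i, |(a • coordSoftThreshold γ d) i| +
        inner ℝ (d - coordSoftThreshold γ d) (x - a • coordSoftThreshold γ d) ≤
      γ * ∑ i, |x i| := by
  rw [real_inner_comm, PiLp.inner_apply, Finset.mul_sum, Finset.mul_sum, ← Finset.sum_add_distrib]
  exact Finset.sum_le_sum fun i _ ↦ mul_abs_add_sub_softThreshold_mul_le hγ ha (d i) (x i)

end SoftThreshold

theorem sparse_group_lasso_prox_closed_form_general {ι : Type*} [Fintype ι] {γ₁ γ₂ : ℝ}
    (d : EuclideanSpace ℝ ι) (hγ₁ : coordSoftThreshold γ₂ d = 0 → 0 ≤ γ₁) (hγ₂ : 0 ≤ γ₂) :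
    IsMinOn (fun x : EuclideanSpace ℝ ι ↦ 1 / 2 * ‖x - d‖ ^ 2 + γ₁ * ‖x‖ + γ₂ * ∑ i, |x i|)
      Set.univ (groupSoftThreshold γ₁ (coordSoftThreshold γ₂ d)) := by
  obtain ⟨a, ha, hsmul⟩ := exists_nonneg_groupSoftThreshold_eq_smul γ₁ (coordSoftThreshold γ₂ d)
  refine isMinOn_half_sq_norm_sub_add_add_of_subgradient
    (isMinOn_groupSoftThreshold fun h ↦ hγ₁ (norm_eq_zero.1 h)) fun x _ ↦ ?_
  rw [hsmul]
  exact mul_sum_abs_add_inner_sub_coordSoftThreshold_le hγ₂ ha d x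

/-- Closed form of the sparse-group Lasso proximal subproblem (S): with
`cᵢ = dᵢ + Th_{γ₂}(-dᵢ)`, the function `x ↦ (1/2)‖x - d‖² + γ₁‖x‖ + γ₂‖x‖₁`
attains its minimum over `ℝⁿ` at `x* = 0` if `‖c‖ ≤ γ₁` and at
`x* = ((‖c‖ - γ₁)/‖c‖) c` otherwise. -/
theorem sparse_group_lasso_prox_closed_form
    {n : ℕ} (d : EuclideanSpace ℝ (Fin n)) (γ₁ γ₂ : ℝ) (hγ₁ : 0 ≤ γ₁) (hγ₂ : 0 ≤ γ₂)
    (Th : ℝ → ℝ → ℝ)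
    (hTh : ∀ γ t, Th γ t = if t < -γ then -γ else if t ≤ γ then t else γ)
    (c : EuclideanSpace ℝ (Fin n)) (hc : ∀ i, c i = d i + Th γ₂ (-(d i)))
    (f : EuclideanSpace ℝ (Fin n) → ℝ)
    (hf : ∀ x, f x = 1 / 2 * ‖x - d‖ ^ 2 + γ₁ * ‖x‖ + γ₂ * ∑ i, |x i|)
    (xstar : EuclideanSpace ℝ (Fin n))
    (hxstar : xstar = if ‖c‖ ≤ γ₁ then 0 else ((‖c‖ - γ₁) / ‖c‖) • c) :
    ∀ x, f xstar ≤ f x := by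
  obtain rfl : c = coordSoftThreshold γ₂ d := by
    ext i
    rw [hc, hTh, add_ite_neg_eq_softThreshold hγ₂, coordSoftThreshold]
  obtain rfl : f = _ := funext hf
  rw [hxstar]
  exact isMinOn_univ_iff.1 (sparse_group_lasso_prox_closed_form_general d (fun _ ↦ hγ₁) hγ₂)
end

section
/- For d ∈ ℝⁿ and γ₁, γ₂ ≥ 0, let c ∈ ℝⁿ be given componentwise by c_i = d_i + Th_{γ₂}(−d_i), where Th_{γ₂}(t) is the clamp of t to [−γ₂, γ₂]. Then the minimum of (1/2)‖d + y₁ + y₂‖² over all y₁, y₂ ∈ ℝⁿ with ‖y₁‖ ≤ γ₁ and ‖y₂‖_∞ ≤ γ₂ equals (1/2)·max(‖c‖ − γ₁, 0)², and it is attained with y₂* = Th_{γ₂}(−d) (applied componentwise) together with y₁* = −c if ‖c‖ ≤ γ₁ and y₁* = −γ₁ c/‖c‖ if ‖c‖ > γ₁. -/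
/-! Minimizing `‖x + y‖` over a ball `‖y‖ ≤ r` gives `max (‖x‖ - r) 0`, in any real seminormed
space, and the radial retraction of `-x` onto the ball is a minimizer. Thresholding is this
retraction on `ℝ`, so `y₂*` minimizes each `|dᵢ + y₂ᵢ|`, hence `‖d + y₂‖`, with `d + y₂* = c`. The
minimum over `y₁` for fixed `y₂` is governed by `max (‖d + y₂‖ - γ₁) 0`, monotone in `‖d + y₂‖`, so
the two problems decouple. -/

section RadialRetraction

variable {E : Type*} [SeminormedAddCommGroup E] {r : ℝ}

theorem max_norm_sub_zero_le_norm_add (x : E) {y : E} (hy : ‖y‖ ≤ r) :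
    max (‖x‖ - r) 0 ≤ ‖x + y‖ := by
  refine max_le ?_ (norm_nonneg _)
  linarith [norm_le_add_norm_add x y]

variable [NormedSpace ℝ E]

/-- The radial retraction of a seminormed space onto the closed ball of radius `r` about the
origin, a nearest-point map that need not be the only one. It is meaningful for `0 ≤ r` only. -/
noncomputable def radialRetraction (r : ℝ) (x : E) : E :=
  if ‖x‖ ≤ r then x else (r / ‖x‖) • x

theorem norm_radialRetraction_le (hr : 0 ≤ r) (x : E) : ‖radialRetraction r x‖ ≤ r := by
  unfold radialRetraction
  split_ifs with h
  · exact h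
  · have hx : 0 < ‖x‖ := hr.trans_lt (not_le.mp h)
    rw [norm_smul, Real.norm_of_nonneg (by positivity), div_mul_cancel₀ _ hx.ne']

theorem radialRetraction_neg (r : ℝ) (x : E) :
    radialRetraction r (-x) = -radialRetraction r x := by
  unfold radialRetraction
  rw [norm_neg, smul_neg, neg_ite]

theorem norm_add_radialRetraction_neg (hr : 0 ≤ r) (x : E) :
    ‖x + radialRetraction r (-x)‖ = max (‖x‖ - r) 0 := by
  rw [radialRetraction_neg, ← sub_eq_add_neg, radialRetraction]
  split_ifs with h
  · rw [sub_self, norm_zero, max_eq_right (sub_nonpos.mpr h)]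
  · have hrx : r < ‖x‖ := not_le.mp h
    have hx : 0 < ‖x‖ := hr.trans_lt hrx
    have hcoef : 0 ≤ 1 - r / ‖x‖ := sub_nonneg.mpr ((div_le_one hx).mpr hrx.le)
    calc ‖x - (r / ‖x‖) • x‖ = ‖(1 - r / ‖x‖) • x‖ := by rw [sub_smul, one_smul]
      _ = (1 - r / ‖x‖) * ‖x‖ := by rw [norm_smul, Real.norm_of_nonneg hcoef]
      _ = ‖x‖ - r := by rw [sub_mul, one_mul, div_mul_cancel₀ _ hx.ne']
      _ = max (‖x‖ - r) 0 := (max_eq_left (sub_nonneg.mpr hrx.le)).symm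

theorem norm_add_radialRetraction_neg_le_norm_add (hr : 0 ≤ r) (x : E) {y : E} (hy : ‖y‖ ≤ r) :
    ‖x + radialRetraction r (-x)‖ ≤ ‖x + y‖ :=
  (norm_add_radialRetraction_neg hr x).trans_le (max_norm_sub_zero_le_norm_add x hy)

theorem radialRetraction_real (hr : 0 ≤ r) (t : ℝ) :
    radialRetraction r t = if t < -r then -r else if t ≤ r then t else r := by
  unfold radialRetraction
  rcases lt_or_ge t (-r) with hlt | hge
  · have ht : t < 0 := by linarith
    rw [Real.norm_of_nonpos ht.le, if_neg (by linarith), if_pos hlt, smul_eq_mul, div_neg,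
      neg_mul, div_mul_cancel₀ _ ht.ne]
  rcases le_or_gt t r with hle | hgt
  · rw [if_pos (Real.norm_eq_abs t ▸ abs_le.mpr ⟨hge, hle⟩), if_neg hge.not_gt, if_pos hle]
  · have ht : 0 < t := hr.trans_lt hgt
    rw [Real.norm_of_nonneg ht.le, if_neg hgt.not_ge, if_neg hge.not_gt, if_neg hgt.not_ge,
      smul_eq_mul, div_mul_cancel₀ _ ht.ne']

end RadialRetraction

theorem piLp_norm_le_norm {ι : Type*} [Fintype ι] {p : ENNReal} [hp : Fact (1 ≤ p)]
    {E : ι → Type*} [∀ i, SeminormedAddCommGroup (E i)] {x y : PiLp p E}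
    (h : ∀ i, ‖x i‖ ≤ ‖y i‖) : ‖x‖ ≤ ‖y‖ := by
  rcases eq_or_ne p ⊤ with rfl | hp_top
  · rw [PiLp.norm_eq_ciSup, PiLp.norm_eq_ciSup]
    have hbdd : BddAbove (Set.range fun i ↦ ‖y i‖) := (Set.finite_range _).bddAbove
    exact ciSup_mono hbdd h
  · have hp_pos : 0 < p.toReal := ENNReal.toReal_pos (zero_lt_one.trans_le hp.out).ne' hp_top
    rw [PiLp.norm_eq_sum hp_pos, PiLp.norm_eq_sum hp_pos]
    gcongr with i
    exact h i

theorem sparse_group_lasso_dual_solution_general {ι : Type*} [Fintype ι]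
    {p : ENNReal} [Fact (1 ≤ p)] {E : ι → Type*} [∀ i, SeminormedAddCommGroup (E i)]
    [∀ i, NormedSpace ℝ (E i)] (d : PiLp p E) {γ₁ : ℝ} {γ₂ : ι → ℝ} (hγ₁ : 0 ≤ γ₁)
    (hγ₂ : ∀ i, 0 ≤ γ₂ i) {c y₁star y₂star : PiLp p E} (hc : c = d + y₂star)
    (hy₂star : ∀ i, y₂star i = radialRetraction (γ₂ i) (-(d i)))
    (hy₁star : y₁star = radialRetraction γ₁ (-c)) :
    ‖y₁star‖ ≤ γ₁ ∧ (∀ i, ‖y₂star i‖ ≤ γ₂ i) ∧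
      1 / 2 * ‖d + y₁star + y₂star‖ ^ 2 = 1 / 2 * max (‖c‖ - γ₁) 0 ^ 2 ∧
      ∀ y₁ y₂ : PiLp p E, ‖y₁‖ ≤ γ₁ → (∀ i, ‖y₂ i‖ ≤ γ₂ i) →
        1 / 2 * ‖d + y₁star + y₂star‖ ^ 2 ≤ 1 / 2 * ‖d + y₁ + y₂‖ ^ 2 := by
  have hvalue : ‖d + y₁star + y₂star‖ = max (‖c‖ - γ₁) 0 := by
    rw [add_right_comm, ← hc, hy₁star, norm_add_radialRetraction_neg hγ₁]
  refine ⟨hy₁star ▸ norm_radialRetraction_le hγ₁ _,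
    fun i ↦ hy₂star i ▸ norm_radialRetraction_le (hγ₂ i) _, by rw [hvalue], ?_⟩
  intro y₁ y₂ hy₁ hy₂
  have hc_le : ‖c‖ ≤ ‖d + y₂‖ := piLp_norm_le_norm fun i ↦ by
    rw [hc, PiLp.add_apply, PiLp.add_apply, hy₂star]
    exact norm_add_radialRetraction_neg_le_norm_add (hγ₂ i) (d i) (hy₂ i)
  have hoptimal : ‖d + y₁star + y₂star‖ ≤ ‖d + y₁ + y₂‖ :=
    calc ‖d + y₁star + y₂star‖ = max (‖c‖ - γ₁) 0 := hvalue
      _ ≤ max (‖d + y₂‖ - γ₁) 0 := by gcongr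
      _ ≤ ‖d + y₂ + y₁‖ := max_norm_sub_zero_le_norm_add _ hy₁
      _ = ‖d + y₁ + y₂‖ := by rw [add_right_comm]
  gcongr

/-- Solution of the Fenchel dual (DS) of the sparse-group Lasso proximal
subproblem: with `cᵢ = dᵢ + Th_{γ₂}(-dᵢ)`, the minimum of `(1/2)‖d + y₁ + y₂‖²`
over `‖y₁‖ ≤ γ₁`, `‖y₂‖_∞ ≤ γ₂` equals `(1/2) max(‖c‖ - γ₁, 0)²`, attained at
`y₂* = Th_{γ₂}(-d)` (componentwise) and `y₁* = -c` if `‖c‖ ≤ γ₁`,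
`y₁* = -γ₁ c/‖c‖` otherwise. -/
theorem sparse_group_lasso_dual_solution
    {n : ℕ} (d : EuclideanSpace ℝ (Fin n)) (γ₁ γ₂ : ℝ) (hγ₁ : 0 ≤ γ₁) (hγ₂ : 0 ≤ γ₂)
    (Th : ℝ → ℝ → ℝ)
    (hTh : ∀ γ t, Th γ t = if t < -γ then -γ else if t ≤ γ then t else γ)
    (c : EuclideanSpace ℝ (Fin n)) (hc : ∀ i, c i = d i + Th γ₂ (-(d i)))
    (y₂star : EuclideanSpace ℝ (Fin n)) (hy₂star : ∀ i, y₂star i = Th γ₂ (-(d i)))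
    (y₁star : EuclideanSpace ℝ (Fin n))
    (hy₁star : y₁star = if ‖c‖ ≤ γ₁ then -c else -((γ₁ / ‖c‖) • c)) :
    ‖y₁star‖ ≤ γ₁ ∧ (∀ i, |y₂star i| ≤ γ₂) ∧
      1 / 2 * ‖d + y₁star + y₂star‖ ^ 2 = 1 / 2 * max (‖c‖ - γ₁) 0 ^ 2 ∧
      ∀ y₁ y₂ : EuclideanSpace ℝ (Fin n), ‖y₁‖ ≤ γ₁ → (∀ i, |y₂ i| ≤ γ₂) →
        1 / 2 * ‖d + y₁star + y₂star‖ ^ 2 ≤ 1 / 2 * ‖d + y₁ + y₂‖ ^ 2 := by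
  have hTh_eq (t : ℝ) : Th γ₂ t = radialRetraction γ₂ t :=
    (hTh γ₂ t).trans (radialRetraction_real hγ₂ t).symm
  exact sparse_group_lasso_dual_solution_general d hγ₁ (fun _ ↦ hγ₂)
    (by ext i; simp only [hc, PiLp.add_apply, hy₂star]) (fun i ↦ (hy₂star i).trans (hTh_eq _))
    (by rw [hy₁star, radialRetraction_neg, radialRetraction, neg_ite])
end
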